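/- arXiv:2602.01691 — 2 statements merged into one kernel-verified Lean document; each statement's English description precedes it below -/
import Mathlib

section
/- (Knight's identity) For every u ∈ (0,1) and all x, y ∈ ℝ, the check function satisfies ρ_u(x − y) − ρ_u(x) = −y·(u − 1{x<0}) + ∫_0^y (1{x ≤ s} − 1{x < 0}) ds, where the integral is the (oriented) integral over the interval from 0 to y. -/
open intervalIntegral

/-- The check (quantile loss) function at level `u`:
`ρ_u(x) = x * (u - 1{x < 0})`. -/
noncomputable def checkFun (u x : ℝ) : ℝ := x * (u - if x < 0 then 1 else 0)

/-- Knight's identity: for every `u ∈ (0,1)` and all `x, y ∈ ℝ`,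
`ρ_u(x - y) - ρ_u(x) = -y * (u - 1{x<0}) + ∫_0^y (1{x ≤ s} - 1{x < 0}) ds`,
where the integral is the oriented integral over the interval from `0` to `y`. -/
theorem knight_identity (u : ℝ) (hu : u ∈ Set.Ioo (0 : ℝ) 1) (x y : ℝ) :
    checkFun u (x - y) - checkFun u x =
      -y * (u - if x < 0 then 1 else 0) +
        ∫ s in (0 : ℝ)..y,
          ((if x ≤ s then (1 : ℝ) else 0) - if x < 0 then (1 : ℝ) else 0) := by
  have hint : ∀ a b : ℝ, IntervalIntegrable (fun s : ℝ => if x ≤ s then (1 : ℝ) else 0)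
      MeasureTheory.volume a b := by
    intro a b
    apply Monotone.intervalIntegrable
    intro s t hst
    dsimp only
    split_ifs <;> first | (exfalso; linarith) | norm_num
  have key : ∀ b : ℝ, ∫ s in x..b, (if x ≤ s then (1 : ℝ) else 0) = max (b - x) 0 := by
    intro b
    rcases le_or_gt x b with h | h
    · rw [intervalIntegral.integral_congr (g := fun _ => (1 : ℝ))]
      · simp [h]
      · intro s hs
        rw [Set.uIcc_of_le h] at hs
        simp [hs.1]
    · rw [intervalIntegral.integral_congr_ae (g := fun _ => (0 : ℝ))]
      · simp [h.le]
      · filter_upwards [MeasureTheory.Measure.ae_ne MeasureTheory.volume x] with s hs hs'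
        rw [Set.uIoc_of_ge h.le] at hs'
        rw [if_neg]
        intro h1
        exact hs (le_antisymm hs'.2 h1)
  have h2 : ∫ s in (0 : ℝ)..y, (if x ≤ s then (1 : ℝ) else 0)
      = max (y - x) 0 - max (0 - x) 0 := by
    rw [← key, ← key, intervalIntegral.integral_interval_sub_left (hint _ _) (hint _ _)]
  rw [intervalIntegral.integral_sub (hint _ _) intervalIntegrable_const, h2,
    intervalIntegral.integral_const]
  unfold checkFun
  simp only [smul_eq_mul]
  rcases max_cases (y - x) 0 with ⟨e, h⟩ | ⟨e, h⟩ <;>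
  rcases max_cases (0 - x) 0 with ⟨e', h'⟩ | ⟨e', h'⟩ <;>
  rw [e, e'] <;> split_ifs <;> first | linarith | nlinarith | skip
end

section
/- Let Y be a real-valued random variable on a probability space with E|Y| < ∞, let F(s) = P(Y ≤ s) be its cumulative distribution function, and let u ∈ (0,1). Then for all a, b ∈ ℝ, E[ρ_u(Y − b)] − E[ρ_u(Y − a)] = ∫_a^b (F(s) − u) ds, where both expectations are finite because |ρ_u(x)| ≤ |x|. -/
open MeasureTheory intervalIntegral

theorem checkFun_eq (u x : ℝ) : checkFun u x = x * u + max (-x) 0 := by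
  unfold checkFun
  split_ifs with h
  · rw [max_eq_left (by linarith)]; ring
  · rw [max_eq_right (by linarith)]; ring

theorem integrable_checkFun {Ω : Type*} [MeasurableSpace Ω] (μ : Measure Ω)
    [IsProbabilityMeasure μ] (Y : Ω → ℝ) (hY : Integrable Y μ) (u c : ℝ) :
    Integrable (fun ω => checkFun u (Y ω - c)) μ := by
  simp only [checkFun_eq]
  have h : Integrable (fun ω => Y ω - c) μ := hY.sub (integrable_const c)
  exact (h.mul_const u).add (h.neg.pos_part)

theorem intervalIntegrable_step (u y a b : ℝ) :
    IntervalIntegrable (fun s : ℝ => (if y ≤ s then (1 : ℝ) else 0) - u) volume a b := by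
  apply MonotoneOn.intervalIntegrable
  intro s _ t _ hst
  simp only
  split_ifs <;> linarith

theorem integral_step (u y a b : ℝ) :
    ∫ s in a..b, ((if y ≤ s then (1 : ℝ) else 0) - u) =
      checkFun u (y - b) - checkFun u (y - a) := by
  refine MeasureTheory.integral_eq_of_hasDerivAt_off_countable
    (fun s => checkFun u (y - s)) _ (Set.countable_singleton y) ?_ ?_
    (intervalIntegrable_step u y a b)
  · simp only [checkFun_eq]
    fun_prop
  · rintro s ⟨-, hs⟩
    have hs' : s ≠ y := hs
    rcases lt_or_gt_of_ne hs' with h | h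
    · rw [if_neg (not_le.2 h)]
      have h1 : HasDerivAt (fun s : ℝ => (y - s) * u) (0 - u) s := by
        simpa using ((hasDerivAt_id s).const_sub y).mul_const u
      refine h1.congr_of_eventuallyEq ?_
      filter_upwards [eventually_lt_nhds h] with t ht
      simp [checkFun, not_lt.2 ht.le]
    · rw [if_pos h.le]
      have h1 : HasDerivAt (fun s : ℝ => (y - s) * (u - 1)) (1 - u) s := by
        simpa using ((hasDerivAt_id s).const_sub y).mul_const (u - 1)
      refine h1.congr_of_eventuallyEq ?_
      filter_upwards [eventually_gt_nhds h] with t ht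
      simp [checkFun, ht]

theorem expected_aux {Ω : Type*} [MeasurableSpace Ω] (μ : Measure Ω) [IsProbabilityMeasure μ]
    (Y : Ω → ℝ) (hm : Measurable Y) (hY : Integrable Y μ) (u a b : ℝ) :
    (∫ ω, checkFun u (Y ω - b) ∂μ) - (∫ ω, checkFun u (Y ω - a) ∂μ) =
      ∫ s in a..b, ((μ {ω | Y ω ≤ s}).toReal - u) := by
  rw [← integral_sub (integrable_checkFun μ Y hY u b) (integrable_checkFun μ Y hY u a)]
  simp only [← integral_step]
  rw [← intervalIntegral_integral_swap]
  · congr 1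
    ext s
    have hs : MeasurableSet {ω | Y ω ≤ s} := measurableSet_le hm measurable_const
    have he : (fun ω => if Y ω ≤ s then (1 : ℝ) else 0) =
        Set.indicator {ω | Y ω ≤ s} (fun _ => (1 : ℝ)) := by
      ext ω
      simp [Set.indicator]
    have hi : Integrable (fun ω => if Y ω ≤ s then (1 : ℝ) else 0) μ := by
      rw [he]
      exact (integrable_const _).indicator hs
    rw [integral_sub hi (integrable_const u), he, integral_indicator_const _ hs]
    simp [Measure.real]
  · have : IsFiniteMeasure (volume.restrict (Set.uIoc a b) : Measure ℝ) :=
      ⟨by simp [Set.uIoc]⟩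
    refine Integrable.of_bound (C := 1 + |u|) ?_ (Filter.Eventually.of_forall ?_)
    · apply Measurable.aestronglyMeasurable
      refine Measurable.sub ?_ measurable_const
      exact Measurable.ite (measurableSet_le (hm.comp measurable_snd) measurable_fst)
        measurable_const measurable_const
    · rintro ⟨s, ω⟩
      simp only [Function.uncurry]
      refine (norm_sub_le _ _).trans ?_
      rw [Real.norm_eq_abs u]
      gcongr
      split_ifs <;> simp

/-- Let `Y` be an integrable real random variable on a probability space, let
`F s = P(Y ≤ s)` be its cumulative distribution function, and let `u ∈ (0,1)`.
Then for all `a, b ∈ ℝ`,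
`E[ρ_u(Y - b)] - E[ρ_u(Y - a)] = ∫_a^b (F(s) - u) ds`. -/
theorem expected_checkLoss_difference
    {Ω : Type*} [MeasurableSpace Ω] (μ : Measure Ω) [IsProbabilityMeasure μ]
    (Y : Ω → ℝ) (hY : Integrable Y μ)
    (F : ℝ → ℝ) (hF : ∀ s : ℝ, F s = (μ {ω | Y ω ≤ s}).toReal)
    (u : ℝ) (hu : u ∈ Set.Ioo (0 : ℝ) 1) (a b : ℝ) :
    (∫ ω, checkFun u (Y ω - b) ∂μ) - (∫ ω, checkFun u (Y ω - a) ∂μ) =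
      ∫ s in a..b, (F s - u) := by
  obtain ⟨Z, hZ, hYZ⟩ := hY.aestronglyMeasurable.aemeasurable
  have e : ∀ c, ∫ ω, checkFun u (Y ω - c) ∂μ = ∫ ω, checkFun u (Z ω - c) ∂μ := by
    intro c
    apply MeasureTheory.integral_congr_ae
    filter_upwards [hYZ] with ω h
    rw [h]
  have e2 : ∀ s, μ {ω | Y ω ≤ s} = μ {ω | Z ω ≤ s} := by
    intro s
    apply measure_congr
    filter_upwards [hYZ] with ω h
    change (Y ω ≤ s) = (Z ω ≤ s)
    rw [h]
  simp only [e, hF, e2]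
  exact expected_aux μ Z hZ (hY.congr hYZ) u a b
end
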